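/- arXiv:1810.11694 — 2 statements merged into one kernel-verified Lean document; each statement's English description precedes it below -/
import Mathlib

section
/- Let K be a field of characteristic zero, V a finite-dimensional K-vector space, and d, e ≥ 1 integers with d + e ≤ dim V. Suppose β : ⋀^d V × ⋀^e V → ⋀^{d+e} V is a K-bilinear map which is GL(V)-equivariant, i.e., β(⋀^d(g)(x), ⋀^e(g)(y)) = ⋀^{d+e}(g)(β(x, y)) for every invertible linear map g : V → V and all x ∈ ⋀^d V, y ∈ ⋀^e V. Then there exists a scalar c ∈ K such that β = c · μ, where μ : ⋀^d V × ⋀^e V → ⋀^{d+e} V is the canonical wedge multiplication (the map induced by the multiplication of the exterior algebra ⋀(V) on its graded components). -/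
/-!
Let `b` be a basis of a free module `M` and write `b_f = b (f 0) ∧ b (f 1) ∧ ⋯`. For `i ≠ j` let
`τ` be the transvection `b j ↦ b j + b i`. A vector of `⋀^m M` fixed by `τ` has zero coordinate at
every index set containing `j` but not `i`, and `τ` preserves the coordinate at every index set
containing both.

* If `f` and `h` share an index `i`, each index set `S` of size `d + e` contains some `j` outside
  both. If `i ∉ S`, the `S`-coordinate of `β(b_f, b_h)` vanishes because `τ` fixes `b_f` and `b_h`.
  If `i ∈ S`, let `h'` be `h` with `i` replaced by `j`; then `τ β(b_f, b_h') - β(b_f, b_h')` is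
  `β(b_f, b_h)`, and its `S`-coordinate vanishes.
* If `f` and `h` are injective and disjoint with union `U`, any `S ≠ U` of the same size contains
  some `j ∉ U` and misses some `i ∈ U`, so again the `S`-coordinate vanishes and `β(b_f, b_h)` is a
  multiple of `b_f ∧ b_h`. Permuting the basis shows that the multiple is always the same.
-/

open ExteriorAlgebra

variable {K V : Type*} [Field K] [AddCommGroup V] [Module K V]

/-- The algebra map of the exterior algebra induced by a linear map `g : V → V`
preserves the `d`-th exterior power. -/
theorem exteriorPower_map_mem (d : ℕ) (g : V →ₗ[K] V) {x : ExteriorAlgebra K V}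
    (hx : x ∈ ⋀[K]^d V) : ExteriorAlgebra.map g x ∈ ⋀[K]^d V := by
  have h : Submodule.map (ExteriorAlgebra.map g).toLinearMap (⋀[K]^d V) ≤ ⋀[K]^d V := by
    rw [show (⋀[K]^d V : Submodule K (ExteriorAlgebra K V)) =
        (LinearMap.range (ι K : V →ₗ[K] ExteriorAlgebra K V)) ^ d from rfl,
      Submodule.map_pow]
    refine pow_le_pow_left' ?_ d
    rw [← LinearMap.range_comp, map_comp_ι, LinearMap.range_comp]
    exact LinearMap.map_le_range
  exact h ⟨x, hx, rfl⟩

/-- The functorial map `⋀^d(g) : ⋀^d V → ⋀^d V` induced by a linear map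
`g : V → V`, sending `v₁ ∧ ⋯ ∧ v_d` to `g(v₁) ∧ ⋯ ∧ g(v_d)`. -/
noncomputable def exteriorPowerMap (d : ℕ) (g : V →ₗ[K] V) :
    ⋀[K]^d V →ₗ[K] ⋀[K]^d V :=
  (ExteriorAlgebra.map g).toLinearMap.restrict fun _ hx => exteriorPower_map_mem d g hx

/-- The canonical wedge multiplication `⋀^d V × ⋀^e V → ⋀^{d+e} V`, induced by
the multiplication of the exterior algebra on its graded components. -/
noncomputable def wedgeMul (d e : ℕ) :
    ⋀[K]^d V →ₗ[K] ⋀[K]^e V →ₗ[K] ⋀[K]^(d + e) V :=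
  LinearMap.mk₂ K
    (fun x y => ⟨(x : ExteriorAlgebra K V) * (y : ExteriorAlgebra K V), by
      have := Submodule.mul_mem_mul x.2 y.2
      rwa [← pow_add] at this⟩)
    (fun x x' y => Subtype.ext (by simp [add_mul]))
    (fun c x y => Subtype.ext (by simp [smul_mul_assoc]))
    (fun x y y' => Subtype.ext (by simp [mul_add]))
    (fun c x y => Subtype.ext (by simp [mul_smul_comm]))

open Module Function
open exteriorPower (pairingDual)

section Transvection

variable {R M N : Type*} [CommRing R] [AddCommGroup M] [Module R M] [AddCommGroup N] [Module R N]
  {m : ℕ}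

theorem map_transvection_ιMulti (φ : Dual R M) (v : M) (w : Fin m → M) (p : Fin m)
    (hw : ∀ q ≠ p, φ (w q) = 0) :
    exteriorPower.map m (LinearMap.transvection φ v) (exteriorPower.ιMulti R m w) =
      exteriorPower.ιMulti R m w + φ (w p) • exteriorPower.ιMulti R m (update w p v) := by
  have hτw : LinearMap.transvection φ v ∘ w = update w p (w p + φ (w p) • v) := by
    ext q
    obtain rfl | hq := eq_or_ne q p
    · simp [LinearMap.transvection.apply]
    · simp [LinearMap.transvection.apply, hq, hw q hq]
  rw [exteriorPower.map_apply_ιMulti, hτw, AlternatingMap.map_update_add,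
    AlternatingMap.map_update_smul, update_eq_self]

theorem dualMap_transvection (φ : Dual R M) (v : M) :
    (LinearMap.transvection φ v).dualMap = LinearMap.transvection (Dual.eval R M v) φ := by
  ext ψ x
  simp [LinearMap.transvection.apply, mul_comm]

theorem pairingDual_map (g : M →ₗ[R] N) (ω : Fin m → Dual R N) (x : ⋀[R]^m M) :
    pairingDual R N m (exteriorPower.ιMulti R m ω) (exteriorPower.map m g x) =
      pairingDual R M m (exteriorPower.ιMulti R m (g.dualMap ∘ ω)) x := by
  suffices h : pairingDual R N m (exteriorPower.ιMulti R m ω) ∘ₗ exteriorPower.map m g =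
      pairingDual R M m (exteriorPower.ιMulti R m (g.dualMap ∘ ω)) from
    LinearMap.congr_fun h x
  ext v
  simp

theorem pairingDual_map_transvection (φ : Dual R M) (v : M) (ω : Fin m → Dual R M) (p : Fin m)
    (hω : ∀ q ≠ p, ω q v = 0) (x : ⋀[R]^m M) :
    pairingDual R M m (exteriorPower.ιMulti R m ω)
        (exteriorPower.map m (LinearMap.transvection φ v) x) =
      pairingDual R M m (exteriorPower.ιMulti R m ω) x +
        ω p v * pairingDual R M m (exteriorPower.ιMulti R m (update ω p φ)) x := by
  rw [pairingDual_map, ← exteriorPower.map_apply_ιMulti, dualMap_transvection,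
    map_transvection_ιMulti _ _ _ p hω]
  simp

end Transvection

section BasisWedge

variable {R M ι : Type*} [CommRing R] [AddCommGroup M] [Module R M] {d e m : ℕ}

/-- The wedge product `b (f 0) ∧ b (f 1) ∧ ⋯` of basis vectors. The index family `f` need not be
monotone or injective, so that exchanging an index is `Function.update`. -/
noncomputable def basisWedge (b : Basis ι R M) (f : Fin m → ι) : ⋀[R]^m M :=
  exteriorPower.ιMulti R m (b ∘ f)

/-- The linear form on `⋀^m M` taking `v 0 ∧ v 1 ∧ ⋯` to the determinant of the coordinates of
the `v l` at the indices `f 0, f 1, …`. For injective `f` it is, up to sign, the coordinate at the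
index set `Set.range f`. -/
noncomputable def wedgeCoord (b : Basis ι R M) (f : Fin m → ι) : Dual R (⋀[R]^m M) :=
  pairingDual R M m (exteriorPower.ιMulti R m (b.coord ∘ f))

theorem basisWedge_eq_zero_of_not_injective (b : Basis ι R M) {f : Fin m → ι}
    (hf : ¬Injective f) : basisWedge b f = 0 :=
  AlternatingMap.map_eq_zero_of_not_injective _ _ fun h => hf h.of_comp

theorem basisWedge_finAppend (b : Basis ι R M) (f : Fin d → ι) (h : Fin e → ι) :
    (basisWedge b (Fin.append f h) : ExteriorAlgebra R M) = basisWedge b f * basisWedge b h := by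
  simp only [basisWedge, exteriorPower.ιMulti_apply_coe, ExteriorAlgebra.ιMulti_mul_ιMulti]
  congr 1
  ext l
  refine Fin.addCases (fun p => ?_) (fun q => ?_) l <;> simp

theorem exteriorPower_bilinear_ext {N P κ : Type*} [AddCommGroup N] [Module R N]
    [AddCommGroup P] [Module R P] (b : Basis ι R M) (b' : Basis κ R N)
    {β γ : ⋀[R]^d M →ₗ[R] ⋀[R]^e N →ₗ[R] P}
    (h : ∀ (f : Fin d → ι) (g : Fin e → κ), Injective f → Injective g →
      β (basisWedge b f) (basisWedge b' g) = γ (basisWedge b f) (basisWedge b' g)) : β = γ :=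
  exteriorPower.linearMap_ext <| b.ext_alternating fun f hf =>
    exteriorPower.linearMap_ext <| b'.ext_alternating fun g hg => h f g hf hg

theorem map_basisEquiv_basisWedge {N κ : Type*} [AddCommGroup N] [Module R N] (b : Basis ι R M)
    (b' : Basis κ R N) (σ : ι ≃ κ) (f : Fin m → ι) :
    exteriorPower.map m (b.equiv b' σ).toLinearMap (basisWedge b f) = basisWedge b' (σ ∘ f) := by
  rw [basisWedge, exteriorPower.map_apply_ιMulti, basisWedge]
  congr 1
  ext l
  simp

theorem map_transvection_basisWedge_of_notMem (b : Basis ι R M) {j : ι} {f : Fin m → ι}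
    (hj : j ∉ Set.range f) (v : M) :
    exteriorPower.map m (LinearMap.transvection (b.coord j) v) (basisWedge b f) =
      basisWedge b f := by
  rw [basisWedge, exteriorPower.map_apply_ιMulti]
  congr 1
  ext l
  have hl : f l ≠ j := fun h => hj ⟨l, h⟩
  simp [LinearMap.transvection.apply, hl]

theorem map_transvection_basisWedge_update (b : Basis ι R M) {j : ι} {f : Fin m → ι}
    (hj : j ∉ Set.range f) (p : Fin m) :
    exteriorPower.map m (LinearMap.transvection (b.coord j) (b (f p)))
        (basisWedge b (update f p j)) =
      basisWedge b (update f p j) + basisWedge b f := by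
  have hrestore : update (b ∘ f) p (b (f p)) = b ∘ f := update_eq_self _ _
  rw [basisWedge, map_transvection_ιMulti _ _ _ p]
  · simp [basisWedge, comp_update, hrestore]
  · intro q hq
    have hfq : f q ≠ j := fun h => hj ⟨q, h⟩
    simp [hq, hfq]

theorem wedgeCoord_eq_zero_of_map_transvection_eq (b : Basis ι R M) {f : Fin m → ι} {i : ι}
    (hi : i ∉ Set.range f) (p : Fin m) {x : ⋀[R]^m M}
    (hx : exteriorPower.map m (LinearMap.transvection (b.coord (f p)) (b i)) x = x) :
    wedgeCoord b f x = 0 := by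
  have hω : ∀ q ≠ p, update (b.coord ∘ f) p (b.coord i) q (b i) = 0 := fun q hq => by
    have hiq : i ≠ f q := fun h => hi ⟨q, h.symm⟩
    simp [hq, hiq]
  have hrestore : update (b.coord ∘ f) p (b.coord (f p)) = b.coord ∘ f := update_eq_self _ _
  have h := pairingDual_map_transvection (b.coord (f p)) (b i) _ p hω x
  rw [hx, left_eq_add, update_idem, hrestore] at h
  simpa [wedgeCoord] using h

theorem wedgeCoord_map_transvection (b : Basis ι R M) {f : Fin m → ι} (hf : Injective f)
    {p q : Fin m} (hpq : p ≠ q) (x : ⋀[R]^m M) :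
    wedgeCoord b f
        (exteriorPower.map m (LinearMap.transvection (b.coord (f q)) (b (f p))) x) =
      wedgeCoord b f x := by
  have hrepeat : exteriorPower.ιMulti R m (update (b.coord ∘ f) p (b.coord (f q))) = 0 :=
    AlternatingMap.map_update_self _ _ hpq
  rw [wedgeCoord, pairingDual_map_transvection _ _ _ p, hrepeat]
  · simp
  · intro r hr
    simp [hf.ne hr.symm]

theorem wedgeCoord_basisWedge_self (b : Basis ι R M) {f : Fin m → ι} (hf : Injective f) :
    wedgeCoord b f (basisWedge b f) = 1 := by
  classical
  rw [wedgeCoord, basisWedge, exteriorPower.pairingDual_ιMulti_ιMulti,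
    ← Matrix.det_one (n := Fin m)]
  congr 1
  ext p q
  simp [Matrix.one_apply, Finsupp.single_apply, hf.eq_iff]

theorem wedgeCoord_comp_perm (b : Basis ι R M) (f : Fin m → ι) (σ : Equiv.Perm (Fin m)) :
    wedgeCoord b (f ∘ σ) = Equiv.Perm.sign σ • wedgeCoord b f := by
  rw [wedgeCoord, ← comp_assoc, AlternatingMap.map_perm, wedgeCoord]
  exact map_zsmul_unit _ _ _

theorem eq_zero_of_forall_wedgeCoord_eq_zero (b : Basis ι R M) {x : ⋀[R]^m M}
    (hx : ∀ f : Fin m → ι, Injective f → wedgeCoord b f x = 0) : x = 0 := by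
  classical
  let : LinearOrder ι := linearOrderOfSTO WellOrderingRel
  refine (b.exteriorPower m).ext_elem fun s => ?_
  rw [exteriorPower.basis_repr_apply, map_zero, Finsupp.zero_apply]
  exact hx _ (Set.powersetCard.ofFinEmbEquiv.symm s).injective

end BasisWedge

theorem exists_perm_comp_eq_of_forall_mem_range {κ ι : Type*} [Finite κ] {f g : κ → ι}
    (hf : Injective f) (hfg : ∀ k, f k ∈ Set.range g) : ∃ σ : Equiv.Perm κ, g ∘ σ = f := by
  choose σ hσ using hfg
  have hgσ : g ∘ σ = f := funext hσ
  have hσ_inj : Injective σ := Injective.of_comp (f := g) (hgσ ▸ hf)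
  exact ⟨Equiv.ofBijective σ (Finite.injective_iff_bijective.mp hσ_inj), hgσ⟩

section Equivariant

variable {R M ι : Type*} [CommRing R] [AddCommGroup M] [Module R M] {d e m : ℕ}

/-- A bilinear map `⋀^d M × ⋀^e M → ⋀^m M` is `GL(M)`-equivariant for the functorial actions. -/
def IsGLEquivariant (β : ⋀[R]^d M →ₗ[R] ⋀[R]^e M →ₗ[R] ⋀[R]^m M) : Prop :=
  ∀ (g : M ≃ₗ[R] M) (x : ⋀[R]^d M) (y : ⋀[R]^e M),
    β (exteriorPower.map d g.toLinearMap x) (exteriorPower.map e g.toLinearMap y) =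
      exteriorPower.map m g.toLinearMap (β x y)

namespace IsGLEquivariant

theorem map_transvection {β : ⋀[R]^d M →ₗ[R] ⋀[R]^e M →ₗ[R] ⋀[R]^m M} (hβ : IsGLEquivariant β)
    {φ : Dual R M} {v : M} (hφ : φ v = 0) (x : ⋀[R]^d M) (y : ⋀[R]^e M) :
    exteriorPower.map m (LinearMap.transvection φ v) (β x y) =
      β (exteriorPower.map d (LinearMap.transvection φ v) x)
        (exteriorPower.map e (LinearMap.transvection φ v) y) :=
  (hβ (LinearEquiv.transvection hφ) x y).symm

theorem wedgeCoord_apply_basisWedge_eq_zero {β : ⋀[R]^d M →ₗ[R] ⋀[R]^e M →ₗ[R] ⋀[R]^m M}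
    (hβ : IsGLEquivariant β) (b : Basis ι R M) {f : Fin d → ι} {h : Fin e → ι} {s : Fin m → ι}
    {l : Fin m} (hf : s l ∉ Set.range f) (hh : s l ∉ Set.range h) {i : ι}
    (hi : i ∉ Set.range s) :
    wedgeCoord b s (β (basisWedge b f) (basisWedge b h)) = 0 := by
  have hil : i ≠ s l := fun hil => hi ⟨l, hil.symm⟩
  refine wedgeCoord_eq_zero_of_map_transvection_eq b hi l ?_
  rw [hβ.map_transvection (by simp [hil]), map_transvection_basisWedge_of_notMem b hf,
    map_transvection_basisWedge_of_notMem b hh]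

variable {β : ⋀[R]^d M →ₗ[R] ⋀[R]^e M →ₗ[R] ⋀[R]^(d + e) M}

theorem apply_basisWedge_eq_zero (hβ : IsGLEquivariant β) (b : Basis ι R M) {f : Fin d → ι}
    {h : Fin e → ι} {p : Fin d} {q : Fin e} (hpq : f p = h q) :
    β (basisWedge b f) (basisWedge b h) = 0 := by
  refine eq_zero_of_forall_wedgeCoord_eq_zero b fun s hs => ?_
  obtain ⟨l, hl⟩ : ∃ l, s l ∉ Set.range (Fin.append f h) := by
    by_contra! hsub
    obtain ⟨σ, hσ⟩ := exists_perm_comp_eq_of_forall_mem_range hs hsub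
    have happend : Injective (Fin.append f h) := σ.injective_comp _ |>.mp (hσ ▸ hs)
    exact (Fin.append_injective_iff.mp happend).2.2 p q hpq
  have hlf : s l ∉ Set.range f := fun ⟨k, hk⟩ => hl ⟨Fin.castAdd e k, by simp [hk]⟩
  have hlh : s l ∉ Set.range h := fun ⟨k, hk⟩ => hl ⟨Fin.natAdd d k, by simp [hk]⟩
  by_cases hr : h q ∈ Set.range s
  · obtain ⟨r, hr⟩ := hr
    have hrl : r ≠ l := fun hrl => hlh ⟨q, by rw [← hr, hrl]⟩
    have hexchange := hβ.map_transvection (φ := b.coord (s l)) (v := b (h q))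
      (by simp [← hr, hs.ne hrl]) (basisWedge b f) (basisWedge b (update h q (s l)))
    rw [map_transvection_basisWedge_of_notMem b hlf, map_transvection_basisWedge_update b hlh,
      map_add, ← hr] at hexchange
    have hcoord := congrArg (wedgeCoord b s) hexchange
    rwa [wedgeCoord_map_transvection b hs hrl, map_add, left_eq_add] at hcoord
  · exact hβ.wedgeCoord_apply_basisWedge_eq_zero b hlf hlh hr

theorem apply_basisWedge_eq_wedgeCoord_smul (hβ : IsGLEquivariant β) (b : Basis ι R M)
    {u : Fin (d + e) → ι} (hu : Injective u) :
    β (basisWedge b (u ∘ Fin.castAdd e)) (basisWedge b (u ∘ Fin.natAdd d)) =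
      wedgeCoord b u
          (β (basisWedge b (u ∘ Fin.castAdd e)) (basisWedge b (u ∘ Fin.natAdd d))) •
        basisWedge b u := by
  set x := β (basisWedge b (u ∘ Fin.castAdd e)) (basisWedge b (u ∘ Fin.natAdd d))
  refine sub_eq_zero.mp (eq_zero_of_forall_wedgeCoord_eq_zero b fun s hs => ?_)
  by_cases hsu : ∀ l, s l ∈ Set.range u
  · obtain ⟨σ, rfl⟩ := exists_perm_comp_eq_of_forall_mem_range hs hsu
    simp [wedgeCoord_comp_perm, wedgeCoord_basisWedge_self b hu]
  obtain ⟨l, hl⟩ := not_forall.mp hsu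
  obtain ⟨k, hk⟩ : ∃ k, u k ∉ Set.range s := by
    by_contra! hus
    obtain ⟨σ, rfl⟩ := exists_perm_comp_eq_of_forall_mem_range hu hus
    exact hl ⟨σ.symm l, by simp⟩
  have hxs : wedgeCoord b s x = 0 :=
    hβ.wedgeCoord_apply_basisWedge_eq_zero b (fun h => hl (Set.range_comp_subset_range _ u h))
      (fun h => hl (Set.range_comp_subset_range _ u h)) hk
  have hus : wedgeCoord b s (basisWedge b u) = 0 :=
    wedgeCoord_eq_zero_of_map_transvection_eq b hk l
      (map_transvection_basisWedge_of_notMem b hl _)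
  rw [map_sub, map_smul, hxs, hus, smul_zero, sub_zero]

theorem exists_apply_basisWedge_eq_smul (hβ : IsGLEquivariant β) (b : Basis ι R M) :
    ∃ c : R, ∀ u : Fin (d + e) → ι, Injective u →
      β (basisWedge b (u ∘ Fin.castAdd e)) (basisWedge b (u ∘ Fin.natAdd d)) =
        c • basisWedge b u := by
  by_cases hex : ∃ u₀ : Fin (d + e) → ι, Injective u₀
  · obtain ⟨u₀, hu₀⟩ := hex
    refine ⟨wedgeCoord b u₀
      (β (basisWedge b (u₀ ∘ Fin.castAdd e)) (basisWedge b (u₀ ∘ Fin.natAdd d))), fun u hu => ?_⟩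
    obtain ⟨σ, hσ⟩ := Equiv.Perm.exists_extending_pair u₀ u hu₀ hu
    obtain rfl : σ ∘ u₀ = u := funext hσ
    have h := congrArg (exteriorPower.map (d + e) (b.equiv b σ).toLinearMap)
      (hβ.apply_basisWedge_eq_wedgeCoord_smul b hu₀)
    rwa [← hβ, map_smul, map_basisEquiv_basisWedge, map_basisEquiv_basisWedge,
      map_basisEquiv_basisWedge] at h
  · exact ⟨0, fun u hu => (hex ⟨u, hu⟩).elim⟩

end IsGLEquivariant

theorem equivariant_bilinear_eq_smul_wedge_general [Module.Free R M]
    (β : ⋀[R]^d M →ₗ[R] ⋀[R]^e M →ₗ[R] ⋀[R]^(d + e) M) (hβ : IsGLEquivariant β) :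
    ∃ c : R, ∀ (x : ⋀[R]^d M) (y : ⋀[R]^e M),
      (β x y : ExteriorAlgebra R M) = c • ((x : ExteriorAlgebra R M) * y) := by
  let b := Module.Free.chooseBasis R M
  obtain ⟨c, hc⟩ := hβ.exists_apply_basisWedge_eq_smul b
  refine ⟨c, fun x y => ?_⟩
  suffices h : β.compr₂ (⋀[R]^(d + e) M).subtype =
      c • (LinearMap.mul R (ExteriorAlgebra R M)).compl₁₂ (⋀[R]^d M).subtype (⋀[R]^e M).subtype
    from LinearMap.congr_fun₂ h x y
  refine exteriorPower_bilinear_ext b b fun f h hf hh => ?_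
  suffices β (basisWedge b f) (basisWedge b h) = c • basisWedge b (Fin.append f h) by
    simp [this, basisWedge_finAppend]
  by_cases hfh : Injective (Fin.append f h)
  · simpa [comp_def] using hc _ hfh
  · have hmeet : ¬∀ p q, f p ≠ h q := fun hne => hfh (Fin.append_injective_iff.mpr ⟨hf, hh, hne⟩)
    push Not at hmeet
    obtain ⟨p, q, hpq⟩ := hmeet
    rw [hβ.apply_basisWedge_eq_zero b hpq, basisWedge_eq_zero_of_not_injective b hfh, smul_zero]

end Equivariant

theorem exteriorPowerMap_eq_map (d : ℕ) (g : V →ₗ[K] V) :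
    exteriorPowerMap d g = exteriorPower.map d g := by
  refine exteriorPower.linearMap_ext (AlternatingMap.ext fun v => Subtype.ext ?_)
  exact (ExteriorAlgebra.map_apply_ιMulti g v).trans
    (congrArg Subtype.val (exteriorPower.map_apply_ιMulti g v).symm)

/-- Over a field of characteristic zero, with `d, e ≥ 1` and `d + e ≤ dim V`,
every `GL(V)`-equivariant bilinear map `β : ⋀^d V × ⋀^e V → ⋀^{d+e} V` is a
scalar multiple of the canonical wedge multiplication. -/
theorem equivariant_bilinear_eq_smul_wedge [CharZero K] [FiniteDimensional K V]
    (d e : ℕ) (hd : 1 ≤ d) (he : 1 ≤ e) (hde : d + e ≤ Module.finrank K V)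
    (β : ⋀[K]^d V →ₗ[K] ⋀[K]^e V →ₗ[K] ⋀[K]^(d + e) V)
    (hβ : ∀ (g : V ≃ₗ[K] V) (x : ⋀[K]^d V) (y : ⋀[K]^e V),
      β (exteriorPowerMap d g.toLinearMap x) (exteriorPowerMap e g.toLinearMap y) =
        exteriorPowerMap (d + e) g.toLinearMap (β x y)) :
    ∃ c : K, ∀ (x : ⋀[K]^d V) (y : ⋀[K]^e V),
      β x y = c • wedgeMul d e x y := by
  obtain ⟨c, hc⟩ := equivariant_bilinear_eq_smul_wedge_general β
    (by simpa only [IsGLEquivariant, exteriorPowerMap_eq_map] using hβ)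
  exact ⟨c, fun x y => Subtype.ext (hc x y)⟩
end

section
/- Let K be a field of characteristic zero, let ℓ_1, …, ℓ_d be nonzero homogeneous degree-one polynomials (linear forms) in K[x_1,…,x_n] that are pairwise non-proportional, with corresponding distinct hyperplanes H_i = {a ∈ K^n : ℓ_i(a) = 0}, and let I = I(H_1 ∪ ⋯ ∪ H_d) be the vanishing ideal of the union. Then for every m ∈ ℕ, the K-dimension of the space of homogeneous polynomials of degree m lying in I equals the binomial coefficient C(m − d + n − 1, n − 1) if m ≥ d, and equals 0 if m < d. Equivalently, the Hilbert series of I is t^d/(1−t)^n. -/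
/-!
Let `ℓ` be a nonzero linear form and choose a point `b` with `ℓ(b) = 1`. The projection
`a ↦ a - ℓ(a) b` maps `K^n` onto the hyperplane `ℓ = 0`, so substituting it into a polynomial `p`
vanishing on that hyperplane yields the zero polynomial. On the other hand this substitution does
not change `p` modulo `ℓ`; hence `ℓ ∣ p`. Pairwise non-proportional linear forms are relatively
prime, so the vanishing ideal of the arrangement is generated by the product `P` of the `d` forms,
and multiplication by `P` identifies the homogeneous polynomials of degree `m - d` with the degree
`m` component of that ideal.
-/

open MvPolynomial

/-- The polynomials vanishing on a subset `S ⊆ K^n` form a `K`-submodule of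
`K[x_1,…,x_n]`. -/
def vanishingSubmodule (K : Type*) [CommSemiring K] (n : ℕ)
    (S : Set (Fin n → K)) : Submodule K (MvPolynomial (Fin n) K) where
  carrier := {p | ∀ a ∈ S, eval a p = 0}
  add_mem' := by
    intro p q hp hq a ha
    simp [map_add, hp a ha, hq a ha]
  zero_mem' := by
    intro a ha
    simp
  smul_mem' := by
    intro c p hp a ha
    simp [smul_eval, hp a ha]

section HomogeneousMultiples

variable {σ R : Type*} [CommSemiring R] {P p : MvPolynomial σ R} {d m : ℕ}

lemma homogeneousComponent_mul_of_isHomogeneous_left (hP : P.IsHomogeneous d)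
    (q : MvPolynomial σ R) (m : ℕ) :
    homogeneousComponent m (P * q) =
      if d ≤ m then P * homogeneousComponent (m - d) q else 0 := by
  let : GradedAlgebra (homogeneousSubmodule σ R) := gradedAlgebra
  simpa only [DirectSum.decompose, Equiv.coe_fn_mk, decomposition.decompose'_apply] using
    DirectSum.coe_decompose_mul_of_left_mem (homogeneousSubmodule σ R) (b := q) m hP

lemma exists_isHomogeneous_mul_eq_of_dvd (hP : P.IsHomogeneous d) (hp : p.IsHomogeneous m)
    (hdm : d ≤ m) (h : P ∣ p) : ∃ q : MvPolynomial σ R, q.IsHomogeneous (m - d) ∧ P * q = p := by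
  obtain ⟨q, rfl⟩ := h
  refine ⟨homogeneousComponent (m - d) q, homogeneousComponent_isHomogeneous _ q, ?_⟩
  simpa only [homogeneousComponent_mul_of_isHomogeneous_left hP, if_pos hdm] using
    homogeneousComponent_eq_self hp

lemma eq_zero_of_isHomogeneous_of_dvd_of_lt (hP : P.IsHomogeneous d) (hp : p.IsHomogeneous m)
    (hmd : m < d) (h : P ∣ p) : p = 0 := by
  obtain ⟨q, rfl⟩ := h
  rw [← homogeneousComponent_eq_self hp, homogeneousComponent_mul_of_isHomogeneous_left hP,
    if_neg hmd.not_ge]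

lemma exists_eq_smul_of_isHomogeneous_of_dvd (hP : P.IsHomogeneous d) (hp : p.IsHomogeneous d)
    (h : P ∣ p) : ∃ c : R, p = c • P := by
  obtain ⟨q, hq, rfl⟩ := exists_isHomogeneous_mul_eq_of_dvd hP hp le_rfl h
  rw [Nat.sub_self, ← totalDegree_zero_iff_isHomogeneous, totalDegree_eq_zero_iff_eq_C] at hq
  exact ⟨coeff 0 q, by rw [smul_eq_C_mul, ← hq, mul_comm]⟩

lemma homogeneousSubmodule_inf_span_singleton_of_le (hP : P.IsHomogeneous d) (hdm : d ≤ m) :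
    homogeneousSubmodule σ R m ⊓ (Ideal.span {P}).restrictScalars R =
      (homogeneousSubmodule σ R (m - d)).map (LinearMap.mulLeft R P) := by
  ext p
  simp only [Submodule.mem_inf, mem_homogeneousSubmodule, Submodule.restrictScalars_mem,
    Ideal.mem_span_singleton, Submodule.mem_map, LinearMap.mulLeft_apply]
  constructor
  · rintro ⟨hp, hPp⟩
    exact exists_isHomogeneous_mul_eq_of_dvd hP hp hdm hPp
  · rintro ⟨q, hq, rfl⟩
    exact ⟨Nat.add_sub_cancel' hdm ▸ hP.mul hq, dvd_mul_right P q⟩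

lemma homogeneousSubmodule_inf_span_singleton_of_lt (hP : P.IsHomogeneous d) (hmd : m < d) :
    homogeneousSubmodule σ R m ⊓ (Ideal.span {P}).restrictScalars R = ⊥ :=
  (Submodule.eq_bot_iff _).mpr fun _ hp ↦
    eq_zero_of_isHomogeneous_of_dvd_of_lt hP hp.1 hmd (Ideal.mem_span_singleton.mp hp.2)

end HomogeneousMultiples

section Finrank

variable {σ R : Type*} [Fintype σ] [CommRing R]

lemma finrank_homogeneousSubmodule [Nontrivial R] (k : ℕ) :
    Module.finrank R (homogeneousSubmodule σ R k) = (Fintype.card σ).multichoose k := by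
  classical
  have support_eq : {e : σ →₀ ℕ | e.degree = k} =
      ↑(Finset.univ.finsuppAntidiag k : Finset (σ →₀ ℕ)) := by
    ext e
    simp [Finsupp.degree_eq_sum]
  rw [show homogeneousSubmodule σ R k = restrictSupport R {e : σ →₀ ℕ | e.degree = k} from
      homogeneousSubmodule_eq_finsupp_supported σ R k,
    Module.finrank_eq_nat_card_basis (basisRestrictSupport R _), support_eq,
    Nat.card_coe_set_eq, Set.ncard_coe_finset,
    Finset.card_finsuppAntidiag_nat_eq_multichoose, Finset.card_univ]

lemma finrank_homogeneousSubmodule_inf_span_singleton [IsDomain R] {P : MvPolynomial σ R} {d : ℕ}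
    (hP : P.IsHomogeneous d) (hP0 : P ≠ 0) (m : ℕ) :
    Module.finrank R ↥(homogeneousSubmodule σ R m ⊓ (Ideal.span {P}).restrictScalars R) =
      if d ≤ m then (Fintype.card σ).multichoose (m - d) else 0 := by
  split_ifs with hdm
  · have mul_injective : Function.Injective (LinearMap.mulLeft R P) := mul_right_injective₀ hP0
    rw [homogeneousSubmodule_inf_span_singleton_of_le hP hdm,
      ← (Submodule.equivMapOfInjective _ mul_injective _).finrank_eq, finrank_homogeneousSubmodule]
  · rw [homogeneousSubmodule_inf_span_singleton_of_lt hP (not_le.mp hdm), finrank_bot]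

end Finrank

lemma dvd_aeval_sub_aeval {σ R S : Type*} [CommSemiring R] [CommRing S] [Algebra R S] {s : S}
    {f g : σ → S} (h : ∀ i, s ∣ f i - g i) (p : MvPolynomial σ R) :
    s ∣ aeval f p - aeval g p := by
  have mk_comp_eq : (Ideal.Quotient.mkₐ R (Ideal.span {s})).comp (aeval f) =
      (Ideal.Quotient.mkₐ R (Ideal.span {s})).comp (aeval g) := by
    ext i
    simpa [Ideal.Quotient.eq, Ideal.mem_span_singleton] using h i
  rw [← Ideal.mem_span_singleton, ← Ideal.Quotient.eq]
  exact DFunLike.congr_fun mk_comp_eq p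

lemma isLinearMap_eval_of_isHomogeneous_one {σ R : Type*} [CommSemiring R]
    {l : MvPolynomial σ R} (hl : l.IsHomogeneous 1) : IsLinearMap R fun a : σ → R ↦ eval a l := by
  rw [← mem_homogeneousSubmodule, homogeneousSubmodule_one_eq_span_X] at hl
  induction hl using Submodule.span_induction with
  | mem _ h =>
    obtain ⟨i, rfl⟩ := h
    simp only [eval_X]
    exact (LinearMap.proj i : (σ → R) →ₗ[R] R).isLinear
  | zero =>
    simp only [map_zero]
    exact (0 : (σ → R) →ₗ[R] R).isLinear
  | add p q _ _ hp hq =>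
    simp only [map_add]
    exact (hp.mk' _ + hq.mk' _).isLinear
  | smul c p _ hp =>
    simp only [smul_eval]
    exact (c • hp.mk' _).isLinear

section LinearForms

variable {σ K : Type*} [Field K] {l l' p : MvPolynomial σ K}

lemma irreducible_of_isHomogeneous_one (hl : l.IsHomogeneous 1) (hl0 : l ≠ 0) : Irreducible l := by
  refine irreducible_of_totalDegree_eq_one (hl.totalDegree hl0) fun x hx ↦ ?_
  rw [isUnit_iff_ne_zero]
  rintro rfl
  exact hl0 (MvPolynomial.ext _ _ fun e ↦ by simpa using hx e)

lemma isRelPrime_of_isHomogeneous_one (hl : l.IsHomogeneous 1) (hl0 : l ≠ 0)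
    (hl' : l'.IsHomogeneous 1) (h : ∀ c : K, l' ≠ c • l) : IsRelPrime l l' := by
  rw [(irreducible_of_isHomogeneous_one hl hl0).isRelPrime_iff_not_dvd]
  intro hdvd
  obtain ⟨c, hc⟩ := exists_eq_smul_of_isHomogeneous_of_dvd hl hl' hdvd
  exact h c hc

variable [Infinite K]

lemma exists_eval_eq_one_of_isHomogeneous_one (hl : l.IsHomogeneous 1) (hl0 : l ≠ 0) :
    ∃ b : σ → K, eval b l = 1 := by
  obtain ⟨a, ha⟩ : ∃ a : σ → K, eval a l ≠ 0 := by
    by_contra! h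
    exact hl0 (hl.eq_zero_of_forall_eval_eq_zero h)
  refine ⟨(eval a l)⁻¹ • a, ?_⟩
  rw [(isLinearMap_eval_of_isHomogeneous_one hl).map_smul, smul_eq_mul, inv_mul_cancel₀ ha]

lemma dvd_of_eval_eq_zero_on_hyperplane (hl : l.IsHomogeneous 1) (hl0 : l ≠ 0)
    (hp : ∀ a, eval a l = 0 → eval a p = 0) : l ∣ p := by
  obtain ⟨b, hb⟩ := exists_eval_eq_one_of_isHomogeneous_one hl hl0
  let proj : σ → MvPolynomial σ K := fun i ↦ X i - l * C (b i)
  have eval_proj (a : σ → K) : (fun i ↦ eval a (proj i)) = a - eval a l • b := by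
    ext i
    simp [proj]
  have l_proj (a : σ → K) : eval (a - eval a l • b) l = 0 := by
    have hlin := isLinearMap_eval_of_isHomogeneous_one hl
    rw [hlin.map_sub, hlin.map_smul, hb, smul_eq_mul, mul_one, sub_self]
  have aeval_proj_eq_zero : aeval proj p = 0 := by
    refine MvPolynomial.funext fun a ↦ ?_
    calc eval a (aeval proj p) = eval (fun i ↦ eval a (proj i)) p := aeval_bind₁ a proj p
      _ = 0 := by rw [eval_proj, hp _ (l_proj a)]
      _ = eval a 0 := (map_zero _).symm
  have dvd_sub : l ∣ aeval X p - aeval proj p :=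
    dvd_aeval_sub_aeval (fun i ↦ by simp [proj]) p
  rwa [aeval_proj_eq_zero, sub_zero, aeval_X_left_apply] at dvd_sub

variable {ι : Type*} [Fintype ι] {ℓ : ι → MvPolynomial σ K}

lemma vanishingIdeal_hyperplanes_eq_span_prod (hne : ∀ i, ℓ i ≠ 0)
    (hhom : ∀ i, (ℓ i).IsHomogeneous 1) (hdist : Pairwise fun i j ↦ ∀ c : K, ℓ i ≠ c • ℓ j) :
    vanishingIdeal K {a : σ → K | ∃ i, eval a (ℓ i) = 0} = Ideal.span {∏ i, ℓ i} := by
  ext p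
  rw [mem_vanishingIdeal_iff, Ideal.mem_span_singleton]
  constructor
  · intro hp
    refine Finset.prod_dvd_of_isRelPrime (fun i _ j _ hij ↦ ?_) fun i _ ↦ ?_
    · exact isRelPrime_of_isHomogeneous_one (hhom i) (hne i) (hhom j) (hdist hij.symm)
    · exact dvd_of_eval_eq_zero_on_hyperplane (hhom i) (hne i) fun a ha ↦ hp a ⟨i, ha⟩
  · rintro ⟨q, rfl⟩ a ⟨i, hi⟩
    rw [aeval_eq_eval, map_mul, map_prod, Finset.prod_eq_zero (Finset.mem_univ i) hi, zero_mul]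

end LinearForms

lemma vanishingSubmodule_eq_restrictScalars_vanishingIdeal {K : Type*} [Field K] {n : ℕ}
    (S : Set (Fin n → K)) :
    vanishingSubmodule K n S = (vanishingIdeal K S).restrictScalars K :=
  rfl

lemma multichoose_eq_choose_sub_one {n : ℕ} (hn : 1 ≤ n) (k : ℕ) :
    n.multichoose k = (k + n - 1).choose (n - 1) := by
  rw [Nat.multichoose_eq, add_comm n k]
  exact Nat.choose_symm_of_eq_add (by omega)

theorem hilbert_function_hyperplane_arrangement_general {K σ ι : Type*} [Field K] [Infinite K]
    [Fintype σ] [Fintype ι] (ℓ : ι → MvPolynomial σ K) (hne : ∀ i, ℓ i ≠ 0)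
    (hhom : ∀ i, (ℓ i).IsHomogeneous 1) (hdist : Pairwise fun i j ↦ ∀ c : K, ℓ i ≠ c • ℓ j)
    (m : ℕ) :
    Module.finrank K ↥(homogeneousSubmodule σ K m ⊓
        (vanishingIdeal K {a : σ → K | ∃ i, eval a (ℓ i) = 0}).restrictScalars K) =
      if Fintype.card ι ≤ m then (Fintype.card σ).multichoose (m - Fintype.card ι) else 0 := by
  have prod_hom : (∏ i, ℓ i).IsHomogeneous (Fintype.card ι) := by
    simpa using IsHomogeneous.prod Finset.univ ℓ (fun _ ↦ 1) fun i _ ↦ hhom i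
  have prod_ne_zero : ∏ i, ℓ i ≠ 0 := Finset.prod_ne_zero_iff.mpr fun i _ ↦ hne i
  rw [vanishingIdeal_hyperplanes_eq_span_prod hne hhom hdist,
    finrank_homogeneousSubmodule_inf_span_singleton prod_hom prod_ne_zero]

/-- For the vanishing ideal `I` of a union of `d` distinct hyperplanes in `K^n`
(`K` of characteristic zero), the dimension of the degree-`m` homogeneous
component of `I` is `C(m − d + n − 1, n − 1)` if `m ≥ d` and `0` otherwise;
equivalently, the Hilbert series of `I` is `t^d/(1−t)^n`. -/
theorem hilbert_function_hyperplane_arrangement (K : Type*) [Field K] [CharZero K]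
    (n d : ℕ) (hn : 1 ≤ n) (hd : 1 ≤ d) (ℓ : Fin d → MvPolynomial (Fin n) K)
    (hne : ∀ i, ℓ i ≠ 0) (hhom : ∀ i, (ℓ i).IsHomogeneous 1)
    (hdist : ∀ i j, i ≠ j → ∀ c : K, ℓ i ≠ c • ℓ j) (m : ℕ) :
    Module.finrank K
      ↥(homogeneousSubmodule (Fin n) K m ⊓
        vanishingSubmodule K n {a : Fin n → K | ∃ i, eval a (ℓ i) = 0}) =
      if d ≤ m then (m - d + n - 1).choose (n - 1) else 0 := by
  rw [vanishingSubmodule_eq_restrictScalars_vanishingIdeal,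
    hilbert_function_hyperplane_arrangement_general ℓ hne hhom hdist m]
  simp only [Fintype.card_fin, multichoose_eq_choose_sub_one hn]
end
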